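/- arXiv:math/0211063 — 2 statements merged into one kernel-verified Lean document; each statement's English description precedes it below -/
import Mathlib

section
/- The complete 3-graph Γ_5 on the vertex set {1,2,3,4,5} has exactly 15 spanning trees; that is, the set of finite sets T of 3-element subsets of {1,2,3,4,5} that are spanning trees on vertex set {1,2,3,4,5} has cardinality 15. -/
open scoped Classical

/-- The realization of a finite set `T` of (3-element) subsets of `V`: the
simple graph on the disjoint union `V ⊕ T` in which each `t ∈ T` is adjacent
exactly to the elements of `t`, and there are no other adjacencies. -/
def realization {V : Type*} (T : Finset (Finset V)) :
    SimpleGraph (V ⊕ {t // t ∈ T}) :=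
  SimpleGraph.fromRel (fun x y =>
    match x, y with
    | Sum.inl v, Sum.inr t => v ∈ t.1
    | _, _ => False)

/-!
The realization of a set `T` of triples has `5 + |T|` vertices and `3 |T|` edges, so it is a tree
exactly when it is connected and `3 |T| + 1 = 5 + |T|`, that is, `|T| = 2`
(`card_edgeSet_realization`). Two triples have a connected realization iff they cover the five
points: an uncovered point would be isolated, and covering triples share a point by counting,
from which everything can be reached (`isTree_realization_iff`). The 15 covering pairs are then
counted by evaluation.
-/

lemma realization_adj_inl_inr {V : Type*} {T : Finset (Finset V)} {v : V} {t : {t // t ∈ T}} :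
    (realization T).Adj (Sum.inl v) (Sum.inr t) ↔ v ∈ t.1 := by
  simp [realization]

lemma not_realization_adj_inl_inl {V : Type*} {T : Finset (Finset V)} {v w : V} :
    ¬ (realization T).Adj (Sum.inl v) (Sum.inl w) := by
  simp [realization]

lemma not_realization_adj_inr_inr {V : Type*} {T : Finset (Finset V)} {s t : {t // t ∈ T}} :
    ¬ (realization T).Adj (Sum.inr s) (Sum.inr t) := by
  simp [realization]

/-- The edges of the realization correspond to the incidences `v ∈ t`, `t ∈ T`. -/
lemma card_edgeSet_realization {V : Type*} (T : Finset (Finset V)) :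
    Nat.card (realization T).edgeSet = ∑ t ∈ T, t.card := by
  have key : Nat.card (Σ t : {t // t ∈ T}, {v // v ∈ t.1}) = Nat.card (realization T).edgeSet := by
    refine Nat.card_eq_of_bijective
      (fun p => ⟨s(Sum.inl p.2.1, Sum.inr p.1), realization_adj_inl_inr.2 p.2.2⟩) ⟨?_, ?_⟩
    · rintro ⟨t, v, hv⟩ ⟨t', v', hv'⟩ h
      obtain ⟨h₁, h₂⟩ | ⟨h₁, -⟩ := Sym2.eq_iff.1 (congrArg Subtype.val h)
      · obtain rfl := Sum.inl_injective h₁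
        obtain rfl := Sum.inr_injective h₂
        rfl
      · exact absurd h₁ Sum.inl_ne_inr
    · rintro ⟨e, he⟩
      induction e using Sym2.ind with
      | _ x y =>
        rw [SimpleGraph.mem_edgeSet] at he
        rcases x with v | t <;> rcases y with w | s
        · exact absurd he not_realization_adj_inl_inl
        · exact ⟨⟨s, v, realization_adj_inl_inr.1 he⟩, rfl⟩
        · exact ⟨⟨t, w, realization_adj_inl_inr.1 he.symm⟩, Subtype.ext Sym2.eq_swap⟩
        · exact absurd he not_realization_adj_inr_inr
  rw [← key, Nat.card_sigma]
  simp only [Nat.card_eq_fintype_card, Fintype.card_coe]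
  exact Finset.sum_coe_sort T Finset.card

lemma isTree_realization_iff {T : Finset (Finset (Fin 5))} (hT : ∀ t ∈ T, t.card = 3) :
    (realization T).IsTree ↔ T.card = 2 ∧ T.sup id = Finset.univ := by
  rw [SimpleGraph.isTree_iff_connected_and_card, card_edgeSet_realization,
    Finset.sum_congr rfl hT]
  have hV : Nat.card (Fin 5 ⊕ {t // t ∈ T}) = 5 + T.card := by simp
  rw [hV, Finset.sum_const, smul_eq_mul]
  constructor
  · rintro ⟨hc, hcard⟩
    refine ⟨by omega, Finset.eq_univ_of_forall fun v => ?_⟩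
    have : Nontrivial (Fin 5 ⊕ {t // t ∈ T}) := Sum.inl_injective.nontrivial (α := Fin 5)
    obtain ⟨w | t, h⟩ := hc.preconnected.exists_adj_of_nontrivial (Sum.inl v)
    · exact absurd h not_realization_adj_inl_inl
    · exact Finset.mem_sup.2 ⟨t.1, t.2, realization_adj_inl_inr.1 h⟩
  · rintro ⟨h2, hu⟩
    refine ⟨?_, by omega⟩
    obtain ⟨c, hc⟩ : ∃ c, ∀ t ∈ T, c ∈ t := by
      obtain ⟨s, t, -, rfl⟩ := Finset.card_eq_two.1 h2
      have hs := hT s (by simp)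
      have ht := hT t (by simp)
      have hst : s ∪ t = Finset.univ := by simpa using hu
      have hi := Finset.card_union_add_card_inter s t
      rw [hst, hs, ht, Finset.card_univ, Fintype.card_fin] at hi
      obtain ⟨c, hc⟩ : (s ∩ t).Nonempty := Finset.card_pos.1 (by omega)
      exact ⟨c, by simpa using hc⟩
    rw [SimpleGraph.connected_iff_exists_forall_reachable]
    have hr (t : {t // t ∈ T}) : (realization T).Reachable (Sum.inl c) (Sum.inr t) :=
      (realization_adj_inl_inr.2 (hc t.1 t.2)).reachable
    refine ⟨Sum.inl c, ?_⟩
    rintro (v | t)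
    · obtain ⟨t, ht, hv⟩ := Finset.mem_sup.1 (hu ▸ Finset.mem_univ v)
      exact (hr ⟨t, ht⟩).trans (realization_adj_inl_inr.2 hv).symm.reachable
    · exact hr t

/-- the complete 3-graph `Γ_5` on 5 vertices has exactly 15
spanning trees: there are exactly 15 finite sets `T` of 3-element subsets of a
5-element set whose realization is a tree. -/
theorem gamma_five_has_fifteen_spanning_trees :
    (Finset.univ.filter (fun T : Finset (Finset (Fin 5)) =>
      (∀ t ∈ T, t.card = 3) ∧ (realization T).IsTree)).card = 15 := by
  have h : (Finset.univ.filter (fun T : Finset (Finset (Fin 5)) =>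
      (∀ t ∈ T, t.card = 3) ∧ (realization T).IsTree)) =
      (Finset.powersetCard 2 (Finset.powersetCard 3 (Finset.univ : Finset (Fin 5)))).filter
        (fun T => T.sup id = Finset.univ) := by
    ext T
    simp only [Finset.mem_filter, Finset.mem_univ, true_and, Finset.mem_powersetCard,
      Finset.subset_iff]
    constructor
    · rintro ⟨hT, ht⟩
      obtain ⟨h2, hu⟩ := (isTree_realization_iff hT).1 ht
      exact ⟨⟨fun t h => ⟨fun _ _ => trivial, hT t h⟩, h2⟩, hu⟩
    · rintro ⟨⟨hT, h2⟩, hu⟩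
      exact ⟨fun t h => (hT h).2, (isTree_realization_iff fun t h => (hT h).2).2 ⟨h2, hu⟩⟩
  rw [h]
  decide +kernel
end

section
/- Let V be a finite type and let G be a simple graph on V. For every vertex p, the determinant (over ℤ) of the matrix obtained from the Laplacian matrix of G by deleting the row and column indexed by p equals the number of spanning trees of G. -/
/-!
Row `v` of the reduced Laplacian is the sum, over the neighbours `u` of `v`, of `e_v - e_u`, where
`e_p` is read as `0`. Since the determinant is multilinear in the rows, it is the sum, over all
maps `f` choosing a neighbour `f v` of every `v ≠ p`, of the determinant of the matrix
`stepMatrix f` with rows `e_v - e_{f v}`.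

* If some vertices never reach `p` under iteration of `f`, their indicator vector lies in the kernel
  of `stepMatrix f`, so the determinant is `0` (`isRooted_of_det_ne_zero`).
* If all vertices reach `p`, then `f` lowers a rank function, so `stepMatrix f` is unitriangular
  and its determinant is `1` (`det_stepMatrix`).

Hence the determinant counts the choices `f` that lead every vertex to `p`. Sending `f` to the graph
with edges `{v, f v}` identifies these with the spanning trees: this graph is connected with at most
`|V| - 1` edges, hence a tree (`parentGraph_isTree`); the tree determines `f`
(`parent_unique`); and every tree arises from mapping `v` to a neighbour closer to `p`
(`exists_parent`).
-/

open scoped Classical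

namespace MatrixTree

variable {V : Type*} {p : V}

/-- `f` is a parent map for a tree rooted at `p`: some rank function strictly decreases along `f`,
so that iterating `f` leads every vertex to `p`. -/
def IsRooted (f : {v : V // v ≠ p} → V) : Prop :=
  ∃ d : V → ℕ, ∀ v : {v : V // v ≠ p}, d (f v) < d v

/-- The graph whose edges are the pairs `{v, f v}`. -/
def parentGraph (f : {v : V // v ≠ p} → V) : SimpleGraph V :=
  SimpleGraph.fromEdgeSet (Set.range fun v : {v : V // v ≠ p} => s((v : V), f v))

/-- The square matrix with rows `e_v - e_{f v}`, where `e_p` is read as `0`. -/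
def stepMatrix [DecidableEq V] (f : {v : V // v ≠ p} → V) : Matrix {v : V // v ≠ p} {v : V // v ≠ p} ℤ :=
  Matrix.of fun v w => (if w = v then 1 else 0) - (if (w : V) = f v then 1 else 0)

lemma IsRooted.ne {f : {v : V // v ≠ p} → V} (hf : IsRooted f) (v : {v : V // v ≠ p}) :
    (v : V) ≠ f v := by
  obtain ⟨d, hd⟩ := hf
  intro h
  have := hd v
  rw [← h] at this
  omega

lemma IsRooted.adj {f : {v : V // v ≠ p} → V} (hf : IsRooted f) (v : {v : V // v ≠ p}) :
    (parentGraph f).Adj v (f v) := by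
  rw [parentGraph, SimpleGraph.fromEdgeSet_adj]
  exact ⟨⟨v, rfl⟩, hf.ne v⟩

/-! ### The determinants of the step matrices -/

lemma det_stepMatrix [Fintype V] [DecidableEq V] {f : {v : V // v ≠ p} → V} (hf : IsRooted f) :
    (stepMatrix f).det = 1 := by
  obtain ⟨d, hd⟩ := id hf
  rw [Matrix.det_apply, Finset.sum_eq_single 1]
  · have h (v : {v : V // v ≠ p}) : stepMatrix f v v = 1 := by
      simp [stepMatrix, hf.ne v]
    simp [h]
  · intro σ _ hσ
    -- In a nonzero term `v = σ v` or `v = f (σ v)` for every `v`, so `σ` never lowers the rank;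
    -- a permutation preserves the sum of the ranks, so no vertex can move.
    by_contra hne
    have hprod : ∀ v, stepMatrix f (σ v) v ≠ 0 := by
      intro v hv
      have h0 : ∏ i, stepMatrix f (σ i) i = 0 := Finset.prod_eq_zero (Finset.mem_univ v) hv
      exact hne (by rw [h0, smul_zero])
    have hcase : ∀ v, σ v = v ∨ d v < d (σ v) := by
      intro v
      by_contra! h
      refine hprod v ?_
      have h1 : v ≠ σ v := fun e => h.1 e.symm
      have h2 : (v : V) ≠ f (σ v) := by
        intro e
        have := hd (σ v)
        rw [← e] at this
        omega
      simp [stepMatrix, h1, h2]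
    have hle : ∀ v ∈ Finset.univ, d (v : {v : V // v ≠ p}) ≤ d (σ v) := by
      intro v _
      rcases hcase v with h | h
      · rw [h]
      · exact h.le
    have hsum : ∑ v : {v : V // v ≠ p}, d v = ∑ v, d (σ v) :=
      (Equiv.sum_comp σ fun v => d v).symm
    have heq := (Finset.sum_eq_sum_iff_of_le hle).1 hsum
    refine hσ (Equiv.ext fun v => ?_)
    rcases hcase v with h | h
    · exact h
    · exact absurd (heq v (Finset.mem_univ v)) h.ne
  · simp

lemma isRooted_of_det_ne_zero [Fintype V] [DecidableEq V] {f : {v : V // v ≠ p} → V}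
    (h : (stepMatrix f).det ≠ 0) : IsRooted f := by
  -- `F` extends `f` to all of `V` by fixing `p`.
  let F : V → V := fun v => if hv : v ≠ p then f ⟨v, hv⟩ else p
  have hF (v : {v : V // v ≠ p}) : F v = f v := by simp [F, v.2]
  have hFp : F p = p := by simp [F]
  let R : V → Prop := fun v => ∃ n, F^[n] v = p
  have hR (v : {v : V // v ≠ p}) : R (f v) ↔ R v := by
    constructor
    · rintro ⟨n, hn⟩
      exact ⟨n + 1, by rw [Function.iterate_succ_apply, hF, hn]⟩
    · rintro ⟨n, hn⟩
      cases n with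
      | zero => exact absurd hn v.2
      | succ n => exact ⟨n, by rw [← hn, Function.iterate_succ_apply, hF]⟩
  have hall : ∀ v, R v := by
    by_contra! hex
    obtain ⟨v₀, hv₀⟩ := hex
    have hp : R p := ⟨0, rfl⟩
    let x : V → ℤ := fun v => if R v then 0 else 1
    refine h (Matrix.exists_mulVec_eq_zero_iff.1 ⟨fun v => x v, ?_, ?_⟩)
    · intro h0
      have := congrFun h0 ⟨v₀, fun e => hv₀ (e ▸ hp)⟩
      simp [x, hv₀] at this
    · funext v
      have h1 : ∑ w : {v : V // v ≠ p}, (if (w : V) = f v then 1 else 0) * x w = x (f v) := by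
        by_cases hfv : f v = p
        · rw [hfv, Finset.sum_eq_zero]
          · simp [x, hp]
          · intro w _
            simp [w.2]
        · rw [Finset.sum_eq_single ⟨f v, hfv⟩]
          · simp
          · intro w _ hw
            rw [if_neg (fun e => hw (Subtype.ext e)), zero_mul]
          · simp
      have h2 : x (f v) = x v := by simp only [x, hR]
      simp only [Matrix.mulVec, dotProduct, stepMatrix, Matrix.of_apply, sub_mul, Finset.sum_sub_distrib, h1, h2]
      simp
  refine ⟨fun v => Nat.find (hall v), fun v => ?_⟩
  have hs := Nat.find_spec (hall v)
  rcases hn : Nat.find (hall v) with _ | n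
  · rw [hn] at hs
    exact absurd hs v.2
  · rw [hn, Function.iterate_succ_apply, hF] at hs
    change Nat.find (hall (f v)) < Nat.find (hall v)
    rw [hn]
    exact Nat.lt_succ_of_le (Nat.find_min' (hall (f v)) hs)

/-! ### Rooted parent maps and trees -/

lemma parentGraph_connected {f : {v : V // v ≠ p} → V} (hf : IsRooted f) :
    (parentGraph f).Connected := by
  obtain ⟨d, hd⟩ := id hf
  have key : ∀ n v, d v = n → (parentGraph f).Reachable v p := by
    intro n
    induction n using Nat.strong_induction_on with
    | _ n ih =>
      intro v hv
      by_cases hvp : v = p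
      · rw [hvp]
      · exact (hf.adj ⟨v, hvp⟩).reachable.trans
          (ih _ (hv ▸ hd ⟨v, hvp⟩) _ rfl)
  have : Nonempty V := ⟨p⟩
  exact ⟨fun u v => (key _ u rfl).trans (key _ v rfl).symm⟩

lemma parentGraph_isTree [Fintype V] {f : {v : V // v ≠ p} → V} (hf : IsRooted f) :
    (parentGraph f).IsTree := by
  have hc := parentGraph_connected hf
  refine SimpleGraph.isTree_iff_connected_and_card.2 ⟨hc, le_antisymm ?_ ?_⟩
  · have h1 : Nat.card (parentGraph f).edgeSet ≤ Nat.card {v : V // v ≠ p} := by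
      have hsub : (parentGraph f).edgeSet ⊆ Set.range fun v : {v : V // v ≠ p} => s((v : V), f v) := by
        rw [parentGraph, SimpleGraph.edgeSet_fromEdgeSet]
        exact Set.sdiff_subset
      exact (Nat.card_mono (Set.finite_range _) hsub).trans
        (Finite.card_range_le _)
    have h2 : Nat.card {v : V // v ≠ p} + 1 = Nat.card V := by
      rw [Nat.card_eq_fintype_card, Nat.card_eq_fintype_card, Fintype.card_subtype_compl]
      have : 0 < Fintype.card V := Fintype.card_pos_iff.2 ⟨p⟩
      simp
      omega
    omega
  · exact hc.card_vert_le_card_edgeSet_add_one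

/-- An edge at `v` of the parent graph leads to the parent of `v` or to a child of `v`. -/
lemma eq_or_of_adj {f : {v : V // v ≠ p} → V} {v w : V} (h : (parentGraph f).Adj v w) :
    (∃ hv : v ≠ p, f ⟨v, hv⟩ = w) ∨ ∃ hw : w ≠ p, f ⟨w, hw⟩ = v := by
  rw [parentGraph, SimpleGraph.fromEdgeSet_adj] at h
  obtain ⟨⟨u, hu⟩, -⟩ := h
  rcases Sym2.eq_iff.1 hu with ⟨rfl, h2⟩ | ⟨rfl, h2⟩
  · exact Or.inl ⟨u.2, h2⟩
  · exact Or.inr ⟨u.2, h2⟩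

lemma parent_unique {f g : {v : V // v ≠ p} → V} (hf : IsRooted f)
    (h : parentGraph f = parentGraph g) : f = g := by
  obtain ⟨d, hd⟩ := id hf
  have key : ∀ n (v : {v : V // v ≠ p}), d v = n → f v = g v := by
    intro n
    induction n using Nat.strong_induction_on with
    | _ n ih =>
      intro v hv
      have hadj := hf.adj v
      rw [h] at hadj
      rcases eq_or_of_adj hadj with ⟨_, h1⟩ | ⟨hw, h1⟩
      · exact h1.symm
      · -- Here `g (f v) = v`; by induction `f (f v) = v`, against the descent of the rank.
        have h2 := ih _ (hv ▸ hd v) ⟨f v, hw⟩ rfl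
        have h3 := hd ⟨f v, hw⟩
        have h4 := hd v
        rw [h2, h1] at h3
        exact absurd h3 (by simpa using h4.le)
  exact funext fun v => key _ v rfl

lemma exists_parent [Fintype V] {T : SimpleGraph V} (hT : T.IsTree) :
    ∃ f : {v : V // v ≠ p} → V,
      (∀ v : {v : V // v ≠ p}, T.Adj v (f v)) ∧ IsRooted f ∧ parentGraph f = T := by
  have hstep : ∀ v : {v : V // v ≠ p}, ∃ w, T.Adj v w ∧ T.dist w p < T.dist v p := by
    rintro ⟨v, hv⟩
    obtain ⟨q, hq⟩ := hT.connected.exists_walk_length_eq_dist v p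
    cases q with
    | nil => exact absurd rfl hv
    | cons hadj q =>
      refine ⟨_, hadj, ?_⟩
      have := SimpleGraph.dist_le q
      simp only [SimpleGraph.Walk.length_cons] at hq
      simp only
      omega
  choose f hadj hdist using hstep
  have hf : IsRooted f := ⟨fun v => T.dist v p, hdist⟩
  refine ⟨f, hadj, hf, ?_⟩
  have hle : parentGraph f ≤ T := by
    intro v w hvw
    rcases eq_or_of_adj hvw with ⟨hv, rfl⟩ | ⟨hw, rfl⟩
    · exact hadj ⟨v, hv⟩
    · exact (hadj ⟨w, hw⟩).symm
  exact (SimpleGraph.isTree_iff_minimal_connected.1 hT).eq_of_le (parentGraph_connected hf) hle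

/-! ### Expansion of the reduced Laplacian -/

lemma lapMatrix_row [Fintype V] [DecidableEq V] (G : SimpleGraph V) [DecidableRel G.Adj]
    (v w : V) : G.lapMatrix ℤ v w
      = ∑ u ∈ G.neighborFinset v, ((if w = v then 1 else 0) - (if w = u then 1 else 0)) := by
  rw [Finset.sum_sub_distrib, Finset.sum_const, SimpleGraph.card_neighborFinset_eq_degree,
    Finset.sum_ite_eq, SimpleGraph.lapMatrix, Matrix.sub_apply, SimpleGraph.degMatrix,
    SimpleGraph.adjMatrix_apply, Matrix.diagonal_apply]
  simp [eq_comm]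

lemma det_expand [Fintype V] [DecidableEq V] (G : SimpleGraph V) [DecidableRel G.Adj] (p : V) :
    ((G.lapMatrix ℤ).submatrix (Subtype.val : {v : V // v ≠ p} → V)
        (Subtype.val : {v : V // v ≠ p} → V)).det
      = ∑ f ∈ Fintype.piFinset fun v : {v : V // v ≠ p} => G.neighborFinset v,
          (stepMatrix f).det := by
  have h := (Matrix.detRowAlternating (R := ℤ) (n := {v : V // v ≠ p})).toMultilinearMap
    |>.map_sum_finset
    (fun v (u : V) w => (if w = v then (1 : ℤ) else 0) - (if (w : V) = u then 1 else 0))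
    (fun v => G.neighborFinset v)
  convert h using 1
  · change _ = Matrix.det _
    congr 1
    ext v w
    rw [Matrix.submatrix_apply, lapMatrix_row, Finset.sum_apply]
    simp only [Subtype.ext_iff]
  · refine Finset.sum_congr rfl fun f _ => ?_
    change _ = Matrix.det _
    rfl

end MatrixTree

open MatrixTree

/-- the unweighted Matrix-Tree Theorem.  For a finite simple graph
`G` and any vertex `p`, the determinant (over `ℤ`) of the Laplacian matrix of
`G` with the row and column of `p` deleted equals the number of spanning trees
of `G` (spanning subgraphs `T ≤ G` that are trees). -/
theorem matrix_tree_theorem_unweighted {V : Type*} [Fintype V] [DecidableEq V]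
    (G : SimpleGraph V) [DecidableRel G.Adj] (p : V) :
    ((G.lapMatrix ℤ).submatrix (Subtype.val : {v : V // v ≠ p} → V)
        (Subtype.val : {v : V // v ≠ p} → V)).det
      = ((Finset.univ.filter
          (fun T : SimpleGraph V => T ≤ G ∧ T.IsTree)).card : ℤ) := by
  have hdet (f : {v : V // v ≠ p} → V) :
      (stepMatrix f).det = if IsRooted f then 1 else 0 := by
    split_ifs with hf
    · exact det_stepMatrix hf
    · exact not_not.1 fun h => hf (isRooted_of_det_ne_zero h)
  rw [det_expand]
  simp only [hdet]
  rw [Finset.sum_boole, Nat.cast_inj]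
  refine Finset.card_bij (fun f _ => parentGraph f) ?_ ?_ ?_
  · intro f hf
    simp only [Finset.mem_filter, Fintype.mem_piFinset, SimpleGraph.mem_neighborFinset] at hf
    simp only [Finset.mem_filter, Finset.mem_univ, true_and]
    refine ⟨fun v w hvw => ?_, parentGraph_isTree hf.2⟩
    rcases eq_or_of_adj hvw with ⟨hv, rfl⟩ | ⟨hw, rfl⟩
    · exact hf.1 ⟨v, hv⟩
    · exact (hf.1 ⟨w, hw⟩).symm
  · intro f hf g _ h
    exact parent_unique (Finset.mem_filter.1 hf).2 h
  · intro T hT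
    obtain ⟨hle, hT⟩ := (Finset.mem_filter.1 hT).2
    obtain ⟨f, hadj, hf, rfl⟩ := exists_parent (p := p) hT
    refine ⟨f, ?_, rfl⟩
    simp only [Finset.mem_filter, Fintype.mem_piFinset, SimpleGraph.mem_neighborFinset]
    exact ⟨fun v => hle (hadj v), hf⟩
end
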